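/- arXiv:1811.03496 — 3 statements merged into one kernel-verified Lean document; each statement's English description precedes it below -/
import Mathlib

section
/- Let N ≥ 1 and consider the affinity dynamics of a single task over N agents with a greedy (max-affinity) assignment sequence σ. Then for every cycle k ≥ N − 1, the affinity pressure is zero: AP k = 0. -/
/-- Affinity dynamics of a single task over `N` agents with assignment
sequence `σ`: initially all affinities are 1; the assigned agent's affinity
is reset to 1, every other agent's affinity is incremented. -/
def affinity {N : ℕ} (σ : ℕ → Fin N) : ℕ → Fin N → ℕ
  | 0, _ => 1
  | k + 1, i => if σ k = i then 1 else affinity σ k i + 1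

/-- Affinity pressure of the task at cycle `k`. -/
def AP {N : ℕ} (σ : ℕ → Fin N) (k : ℕ) : ℚ :=
  (∑ i : Fin N, (affinity σ k i : ℚ)) / N - (N + 1) / 2

/-- `σ` is greedy (max-affinity): at every cycle the assigned agent has
maximal affinity. -/
def Greedy {N : ℕ} (σ : ℕ → Fin N) : Prop :=
  ∀ k i, affinity σ k i ≤ affinity σ k (σ k)

/-!
Under a greedy assignment the affinities occurring at any cycle form an initial segment `1, …, m`
of the positive integers: the assigned agent supplies the value `1`, all others move up by one, and
the only value that can be lost on the way is the maximum. Hence no affinity ever exceeds `N`. On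
the other hand, two agents share an affinity at cycle `k` only if neither has been assigned yet,
that is, if both have affinity `k + 1`; one of the two then has affinity `k + 2` at the next cycle,
so that `k + 2 ≤ N`. From cycle `N - 1` on, the affinities are therefore a permutation of
`1, …, N`, whose mean is `(N + 1) / 2`.
-/

section Dynamics

variable {N : ℕ} {σ : ℕ → Fin N} {k : ℕ}

@[simp]
theorem affinity_zero (σ : ℕ → Fin N) (i : Fin N) : affinity σ 0 i = 1 := rfl

@[simp]
theorem affinity_succ_self (σ : ℕ → Fin N) (k : ℕ) :
    affinity σ (k + 1) (σ k) = 1 :=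
  if_pos rfl

theorem affinity_succ_of_ne {i : Fin N} (h : i ≠ σ k) :
    affinity σ (k + 1) i = affinity σ k i + 1 :=
  if_neg h.symm

theorem affinity_pos (σ : ℕ → Fin N) (k : ℕ) (i : Fin N) : 0 < affinity σ k i := by
  cases k with
  | zero => simp
  | succ k =>
    obtain rfl | hi := eq_or_ne i (σ k)
    · simp
    · simp [affinity_succ_of_ne hi]

theorem affinity_succ_eq_one_iff {i : Fin N} : affinity σ (k + 1) i = 1 ↔ i = σ k := by
  refine ⟨fun h ↦ ?_, fun h ↦ h ▸ affinity_succ_self σ k⟩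
  by_contra hi
  rw [affinity_succ_of_ne hi, Nat.add_eq_right] at h
  exact (affinity_pos σ k i).ne' h

theorem affinity_eq_add_one_of_affinity_eq {i j : Fin N} (hij : i ≠ j)
    (h : affinity σ k i = affinity σ k j) : affinity σ k i = k + 1 := by
  induction k with
  | zero => simp
  | succ k ih =>
    have hiff : i = σ k ↔ j = σ k := by
      rw [← affinity_succ_eq_one_iff, ← affinity_succ_eq_one_iff, h]
    have hi : i ≠ σ k := fun hi ↦ hij (hi.trans (hiff.mp hi).symm)
    have hj : j ≠ σ k := mt hiff.mpr hi
    rw [affinity_succ_of_ne hi, affinity_succ_of_ne hj, Nat.add_right_cancel_iff] at h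
    rw [affinity_succ_of_ne hi, ih h]

namespace Greedy

theorem exists_affinity_eq (hσ : Greedy σ) {i : Fin N} {v : ℕ} (hv : 0 < v)
    (hvi : v ≤ affinity σ k i) : ∃ j, affinity σ k j = v := by
  induction k generalizing i v with
  | zero => exact ⟨i, hvi.antisymm' hv⟩
  | succ k ih =>
    obtain _ | _ | v := v
    · exact absurd hv (lt_irrefl 0)
    · exact ⟨σ k, affinity_succ_self σ k⟩
    have hi : i ≠ σ k := by
      rintro rfl
      simp at hvi
    rw [affinity_succ_of_ne hi, Nat.add_le_add_iff_right] at hvi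
    obtain ⟨j, hjv⟩ := ih v.succ_pos hvi
    obtain rfl | hj := eq_or_ne j (σ k)
    · have hiv : affinity σ k i = v + 1 := ((hσ k i).trans_eq hjv).antisymm hvi
      exact ⟨i, by rw [affinity_succ_of_ne hi, hiv]⟩
    · exact ⟨j, by rw [affinity_succ_of_ne hj, hjv]⟩

theorem affinity_le (hσ : Greedy σ) (k : ℕ) (i : Fin N) : affinity σ k i ≤ N := by
  have hsub : Finset.Icc 1 (affinity σ k i) ⊆ Finset.univ.image (affinity σ k) := fun v hv ↦ by
    obtain ⟨hv, hvi⟩ := Finset.mem_Icc.mp hv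
    simpa using hσ.exists_affinity_eq hv hvi
  calc
    affinity σ k i = (Finset.Icc 1 (affinity σ k i)).card := by simp
    _ ≤ (Finset.univ.image (affinity σ k)).card := Finset.card_le_card hsub
    _ ≤ N := by simpa using Finset.card_image_le (s := Finset.univ) (f := affinity σ k)

theorem affinity_injective (hσ : Greedy σ) (hk : N ≤ k + 1) :
    Function.Injective (affinity σ k) := by
  intro i j h
  by_contra hij
  obtain ⟨l, hl, hlk⟩ : ∃ l, l ≠ σ k ∧ affinity σ k l = k + 1 := by
    have hik := affinity_eq_add_one_of_affinity_eq hij h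
    obtain rfl | hi := eq_or_ne i (σ k)
    · exact ⟨j, Ne.symm hij, h ▸ hik⟩
    · exact ⟨i, hi, hik⟩
  have hle := hσ.affinity_le (k + 1) l
  rw [affinity_succ_of_ne hl, hlk] at hle
  lia

theorem image_affinity (hσ : Greedy σ) (hk : N ≤ k + 1) :
    Finset.univ.image (affinity σ k) = Finset.Icc 1 N := by
  refine Finset.eq_of_subset_of_card_le ?_ ?_
  · intro v hv
    obtain ⟨i, -, rfl⟩ := Finset.mem_image.mp hv
    exact Finset.mem_Icc.mpr ⟨affinity_pos σ k i, hσ.affinity_le k i⟩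
  · simp [Finset.card_image_of_injective _ (hσ.affinity_injective hk)]

theorem sum_affinity_mul_two (hσ : Greedy σ) (hk : N ≤ k + 1) :
    (∑ i, affinity σ k i) * 2 = N * (N + 1) :=
  calc
    (∑ i, affinity σ k i) * 2 = (∑ v ∈ Finset.univ.image (affinity σ k), v) * 2 := by
      rw [Finset.sum_image (hσ.affinity_injective hk).injOn]
    _ = (∑ v ∈ Finset.range (N + 1), v) * 2 := by
      rw [hσ.image_affinity hk, Finset.range_eq_Ico, Finset.sum_eq_sum_Ico_succ_bot (by lia),
        zero_add, zero_add, Finset.Ico_add_one_right_eq_Icc]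
    _ = N * (N + 1) := by rw [Finset.sum_range_id_mul_two, Nat.add_sub_cancel, mul_comm]

end Greedy

end Dynamics

theorem greedy_AP_eq_zero {N : ℕ} (hN : 1 ≤ N) (σ : ℕ → Fin N)
    (hσ : Greedy σ) : ∀ k, N - 1 ≤ k → AP σ k = 0 := by
  intro k hk
  have hsum : (∑ i, (affinity σ k i : ℚ)) * 2 = N * (N + 1) := mod_cast
    hσ.sum_affinity_mul_two (Nat.sub_le_iff_le_add.mp hk)
  have hN₀ : (N : ℚ) ≠ 0 := mod_cast Nat.one_le_iff_ne_zero.mp hN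
  rw [AP, sub_eq_zero, div_eq_div_iff hN₀ two_ne_zero, hsum, mul_comm]
end

section
/- Let N ≥ 1, M ≥ 0 with N ≤ M + 1, and let f : Fin N → ℕ satisfy: 1 ≤ f i ≤ M + 1 for all i, and f is injective on the set of indices i with f i ≤ M (i.e., if f i = f j and f i ≤ M then i = j). Then ∑ i, f i ≥ N (N + 1) / 2. -/
/-!
Let `n` be the number of terms. For `k < n` the terms not exceeding `k` are distinct elements of
`{1, ..., k}`, so at least `n - k` terms exceed `k`. The sum of the terms counts the pairs of a term
and a natural number below it; counting these pairs by the second component gives at least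
`∑ k < n, (n - k) = n (n + 1) / 2`.
-/

open Finset

section

variable {ι : Type*}

lemma sum_card_filter_lt_le_sum (s : Finset ι) (f : ι → ℕ) (n : ℕ) :
    ∑ k ∈ range n, #{i ∈ s | k < f i} ≤ ∑ i ∈ s, f i :=
  calc
    ∑ k ∈ range n, #{i ∈ s | k < f i} = ∑ i ∈ s, #{k ∈ range n | k < f i} :=
      sum_card_bipartiteAbove_eq_sum_card_bipartiteBelow fun k i ↦ k < f i
    _ ≤ ∑ i ∈ s, #(range (f i)) := by
      gcongr with i
      intro k hk
      exact mem_range.2 (mem_filter.1 hk).2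
    _ = ∑ i ∈ s, f i := by simp only [card_range]

lemma sum_range_self_sub (n : ℕ) : ∑ k ∈ range n, (n - k) = n * (n + 1) / 2 :=
  calc
    ∑ k ∈ range n, (n - k) = ∑ k ∈ range (n + 1), (n - k) := by
      rw [sum_range_succ, Nat.sub_self, add_zero]
    _ = ∑ k ∈ range (n + 1), k := sum_flip fun k ↦ k
    _ = n * (n + 1) / 2 := by rw [sum_range_id, Nat.add_sub_cancel, mul_comm]

variable {s : Finset ι} {f : ι → ℕ}

lemma triangular_le_sum_of_card_filter_le (h : ∀ k < #s, #{i ∈ s | f i ≤ k} ≤ k) :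
    #s * (#s + 1) / 2 ≤ ∑ i ∈ s, f i :=
  calc
    #s * (#s + 1) / 2 = ∑ k ∈ range #s, (#s - k) := (sum_range_self_sub #s).symm
    _ ≤ ∑ k ∈ range #s, #{i ∈ s | k < f i} := by
      refine sum_le_sum fun k hk ↦ ?_
      have hcard : #{i ∈ s | f i ≤ k} + #{i ∈ s | k < f i} = #s := by
        simpa only [not_le] using card_filter_add_card_filter_not (s := s) fun i ↦ f i ≤ k
      have hle := h k (mem_range.1 hk)
      lia
    _ ≤ ∑ i ∈ s, f i := sum_card_filter_lt_le_sum s f #s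

lemma card_filter_le_le_of_injOn {k : ℕ} (hpos : ∀ i ∈ s, 1 ≤ f i)
    (hinj : Set.InjOn f {i ∈ s | f i ≤ k}) : #{i ∈ s | f i ≤ k} ≤ k :=
  calc
    #{i ∈ s | f i ≤ k} ≤ #(Icc 1 k) := by
      refine card_le_card_of_injOn f (fun i hi ↦ ?_) (by simpa only [coe_filter] using hinj)
      obtain ⟨his, hik⟩ := mem_filter.1 hi
      exact mem_Icc.2 ⟨hpos i his, hik⟩
    _ = k := by rw [Nat.card_Icc, Nat.add_sub_cancel]

theorem sum_ge_triangular_general {M : ℕ} (hcard : #s ≤ M + 1) (hpos : ∀ i ∈ s, 1 ≤ f i)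
    (hinj : Set.InjOn f {i ∈ s | f i ≤ M}) : #s * (#s + 1) / 2 ≤ ∑ i ∈ s, f i := by
  refine triangular_le_sum_of_card_filter_le fun k hk ↦ card_filter_le_le_of_injOn hpos ?_
  have hkM : k ≤ M := Nat.le_of_lt_succ (hk.trans_le hcard)
  exact hinj.mono (Set.ofPred_subset_ofPred.2 fun i ⟨his, hik⟩ ↦ ⟨his, hik.trans hkM⟩)

end

theorem sum_ge_triangular {N M : ℕ} (hN : 1 ≤ N) (hNM : N ≤ M + 1)
    (f : Fin N → ℕ) (hlb : ∀ i, 1 ≤ f i) (hub : ∀ i, f i ≤ M + 1)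
    (hinj : ∀ i j, f i = f j → f i ≤ M → i = j) :
    N * (N + 1) / 2 ≤ ∑ i, f i := by
  simpa only [card_fin] using sum_ge_triangular_general (s := univ) (by rwa [card_fin])
    (fun i _ ↦ hlb i) fun i hi j _ hij ↦ hinj i j hij hi.2
end

section
/- Consider the affinity dynamics of a single task over N agents with the round-robin assignment sequence σ t = t mod N. If N ≥ 2, then for every cycle k with k < N − 1 the affinity pressure is strictly negative: AP k < 0. -/
/-!
In one cycle every agent gains one unit of affinity, except that the assigned agent's affinity
drops to `1`, so the total affinity changes by `N` minus the affinity of the assigned agent. As long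
as no agent has been assigned twice, the agent assigned at cycle `k` has affinity `k + 1`, its
initial value incremented `k` times. Summing these changes gives
`AP σ k = -((N - k) * (N - k - 1)) / (2 * N)`, which is negative for `k < N - 1`. Round-robin
repeats no agent during the first `N` cycles.
-/

section Affinity

variable {N : ℕ} {σ : ℕ → Fin N} {k : ℕ}

theorem affinity_eq_of_forall_ne {i : Fin N} (h : ∀ j < k, σ j ≠ i) :
    affinity σ k i = k + 1 := by
  induction k with
  | zero => rfl
  | succ k ih =>
    rw [affinity, if_neg (h k k.lt_succ_self), ih fun j hj => h j (hj.trans k.lt_succ_self)]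

theorem sum_affinity_succ (σ : ℕ → Fin N) (k : ℕ) :
    ∑ i, affinity σ (k + 1) i + affinity σ k (σ k) = ∑ i, affinity σ k i + N := by
  have pointwise (i : Fin N) :
      affinity σ (k + 1) i + (if σ k = i then affinity σ k i else 0) = affinity σ k i + 1 := by
    rw [affinity]
    split_ifs <;> omega
  simpa [Finset.sum_add_distrib] using Fintype.sum_congr _ _ pointwise

theorem two_mul_sum_affinity_of_injOn (hσ : Set.InjOn σ (Set.Iio k)) :
    2 * ∑ i, affinity σ k i + k * (k + 1) = 2 * N * (k + 1) := by
  induction k with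
  | zero => simp [affinity]
  | succ k ih =>
    have assigned : affinity σ k (σ k) = k + 1 :=
      affinity_eq_of_forall_ne fun j hj =>
        hσ.ne (hj.trans k.lt_succ_self) k.lt_succ_self hj.ne
    have total := sum_affinity_succ σ k
    rw [assigned] at total
    linarith [ih (hσ.mono (Set.Iio_subset_Iio k.le_succ))]

theorem AP_eq_of_injOn (hσ : Set.InjOn σ (Set.Iio k)) :
    AP σ k = -(((N : ℚ) - k) * (N - k - 1)) / (2 * N) := by
  have hN : (N : ℚ) ≠ 0 := Nat.cast_ne_zero.2 (σ 0).pos.ne'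
  have total : 2 * ∑ i, (affinity σ k i : ℚ) + k * (k + 1) = 2 * N * (k + 1) :=
    mod_cast two_mul_sum_affinity_of_injOn hσ
  rw [AP]
  field_simp
  linear_combination total

theorem injOn_of_roundRobin (hσ : ∀ t, (σ t : ℕ) = t % N) : Set.InjOn σ (Set.Iio N) := by
  intro s hs t ht hst
  rw [← Nat.mod_eq_of_lt hs, ← Nat.mod_eq_of_lt ht, ← hσ, ← hσ, hst]

theorem roundRobin_AP_neg_general (hk : k < N - 1) (hσ : Set.InjOn σ (Set.Iio k)) :
    AP σ k < 0 := by
  have hkN : (k : ℚ) + 1 < N := mod_cast Nat.add_lt_of_lt_sub hk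
  have hN : (0 : ℚ) < N := Nat.cast_pos.2 (σ 0).pos
  rw [AP_eq_of_injOn hσ]
  exact div_neg_of_neg_of_pos
    (neg_neg_of_pos (mul_pos (by linarith) (by linarith))) (by positivity)

end Affinity

theorem roundRobin_AP_neg {N : ℕ} (hN : 2 ≤ N) (σ : ℕ → Fin N)
    (hσ : ∀ t, (σ t : ℕ) = t % N) :
    ∀ k, k < N - 1 → AP σ k < 0 := fun _ hk =>
  roundRobin_AP_neg_general hk
    ((injOn_of_roundRobin hσ).mono (Set.Iio_subset_Iio (hk.le.trans (Nat.sub_le N 1))))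
end
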